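/- arXiv:math/0607749 — 2 statements merged into one kernel-verified Lean document; each statement's English description precedes it below -/
import Mathlib

section
/- Let I be a nonempty open real interval and r : I → ℝ a twice differentiable function with r(u) > 0 for all u ∈ I, satisfying the differential equation r(u)·r″(u) = 2·r′(u)² on I. Then 1/r is affine: there exist constants α, β ∈ ℝ such that r(u) = 1/(α·u + β) for all u ∈ I. -/
/-!
Writing `s = 1/r`, one has `s' = -r'/r²` and `s'' = -(r r'' - 2 r'²)/r³`, so the equation says
exactly that `s'' = 0`. Hence `s'` is a constant `α` on the interval, and `s - α u` is a
constant `β`.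
-/

open Real

theorem ode_r_rpp_eq_two_rp_sq
    (I : Set ℝ) (hIopen : IsOpen I) (hIne : I.Nonempty) (hIconn : I.OrdConnected)
    (r : ℝ → ℝ)
    (hdiff : ∀ u ∈ I, DifferentiableAt ℝ r u)
    (hdiff2 : ∀ u ∈ I, DifferentiableAt ℝ (deriv r) u)
    (hrpos : ∀ u ∈ I, 0 < r u)
    (hode : ∀ u ∈ I, r u * deriv (deriv r) u = 2 * (deriv r u) ^ 2) :
    ∃ α β : ℝ, ∀ u ∈ I, r u = 1 / (α * u + β) := by
  have hpre : IsPreconnected I := hIconn.isPreconnected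
  have hs' : ∀ u ∈ I, HasDerivAt (fun x => -deriv r x / r x ^ 2) 0 u := by
    intro u hu
    have hne := (hrpos u hu).ne'
    have h := ((hdiff2 u hu).hasDerivAt.fun_neg).fun_div ((hdiff u hu).hasDerivAt.fun_pow 2)
      (pow_ne_zero 2 hne)
    refine h.congr_deriv ?_
    rw [div_eq_zero_iff]
    left
    push_cast
    linear_combination (-r u) * hode u hu
  obtain ⟨α, hα⟩ := hIopen.exists_is_const_of_deriv_eq_zero hpre
    (fun u hu => (hs' u hu).differentiableAt.differentiableWithinAt) (fun u hu => (hs' u hu).deriv)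
  have hs : ∀ u ∈ I, HasDerivAt (fun x => (r x)⁻¹ - α * x) 0 u := by
    intro u hu
    have h := ((hdiff u hu).hasDerivAt.fun_inv (hrpos u hu).ne').fun_sub
      ((hasDerivAt_id' u).const_mul α)
    refine h.congr_deriv ?_
    rw [hα u hu]
    ring
  obtain ⟨β, hβ⟩ := hIopen.exists_is_const_of_deriv_eq_zero hpre
    (fun u hu => (hs u hu).differentiableAt.differentiableWithinAt) (fun u hu => (hs u hu).deriv)
  refine ⟨α, β, fun u hu => ?_⟩
  rw [← hβ u hu, add_sub_cancel, one_div, inv_inv]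
end

section
/- Let a, b, κ, r, γ be real numbers with a ≠ 0, b ≠ 0, κ ≠ 0 and a² + 4b ≠ 0. Then it is impossible that both γ⁴ + κ²·γ²·(a² + 2b − 2r²) + κ⁴·(b² − (a² + 2b)·r² + r⁴) = 0 and 8·γ⁴ + (7·(a² + 2b) − 16·r²)·κ²·γ² + κ⁴·(6·b² − 7·(a² + 2b)·r² + 8·r⁴) = 0 hold simultaneously. -/
open Real

theorem x1_y1_no_common_root
    (a b κ r γ : ℝ) (ha : a ≠ 0) (hb : b ≠ 0) (hκ : κ ≠ 0) (hab : a ^ 2 + 4 * b ≠ 0) :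
    ¬ (γ ^ 4 + κ ^ 2 * γ ^ 2 * (a ^ 2 + 2 * b - 2 * r ^ 2)
        + κ ^ 4 * (b ^ 2 - (a ^ 2 + 2 * b) * r ^ 2 + r ^ 4) = 0 ∧
      8 * γ ^ 4 + (7 * (a ^ 2 + 2 * b) - 16 * r ^ 2) * κ ^ 2 * γ ^ 2
        + κ ^ 4 * (6 * b ^ 2 - 7 * (a ^ 2 + 2 * b) * r ^ 2 + 8 * r ^ 4) = 0) := by
  rintro ⟨h₁, h₂⟩
  -- With `u = γ² - κ² r²` the equations read `u² + (a² + 2b) κ² u + b² κ⁴ = 0` and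
  -- `8 u² + 7 (a² + 2b) κ² u + 6 b² κ⁴ = 0`; second minus seven times first is `u² = b² κ⁴`.
  obtain ⟨u, hu⟩ : ∃ u, u = γ ^ 2 - κ ^ 2 * r ^ 2 := ⟨_, rfl⟩
  have e₁ : u ^ 2 + (a ^ 2 + 2 * b) * κ ^ 2 * u + b ^ 2 * κ ^ 4 = 0 := by
    rw [hu]; linear_combination h₁
  have e₂ : u ^ 2 = (b * κ ^ 2) ^ 2 := by
    rw [hu]; linear_combination h₂ - 7 * h₁
  rcases sq_eq_sq_iff_eq_or_eq_neg.mp e₂ with h | h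
  · have : b * κ ^ 4 * (a ^ 2 + 4 * b) = 0 := by
      rw [h] at e₁; linear_combination e₁
    exact mul_ne_zero (mul_ne_zero hb (pow_ne_zero 4 hκ)) hab this
  · have : b * κ ^ 4 * a ^ 2 = 0 := by
      rw [h] at e₁; linear_combination -e₁
    exact mul_ne_zero (mul_ne_zero hb (pow_ne_zero 4 hκ)) (pow_ne_zero 2 ha) this
end
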